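/- arXiv:1103.1310 — 2 statements merged into one kernel-verified Lean document; each statement's English description precedes it below -/
import Mathlib

section
/- Let V be a real inner product space, let (x_i)_{i=1}^∞ be a sequence of vectors in V that is linearly independent (every finite subfamily is linearly independent), and let p be a real number with 0 ≤ p < 1. Then there exists a sequence (z_i)_{i=1}^∞ in V such that span{z_1, …, z_i} = span{x_1, …, x_i} for every i ≥ 1, ‖z_i‖ = 1 for all i ≥ 1, and ⟪z_i, z_j⟫ = p for all i ≠ j. -/
open scoped RealInnerProductSpace

/-! Two linearly independent families can be matched by a linear isometry carrying the flag of one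
to the flag of the other: orthonormalise both and send one orthonormal family to the other. So it
suffices to realise the prescribed inner products by *some* linearly independent family, in any
inner product space. The prescribed Gram matrix `(1 - p) I + p J` is positive definite, hence it is
itself an inner product on the finitely supported functions, and the standard basis of that space
has the required inner products. -/

section PrescribedGram

open Matrix Module Submodule
open scoped ComplexOrder

variable {𝕜 ι : Type*} [RCLike 𝕜]

/-- The inner product on `ι →₀ 𝕜` for which the standard basis has Gram matrix `K`, given as a
`Core` because `ι →₀ 𝕜` carries no norm of its own. -/
noncomputable abbrev finsuppCoreOfPosDef {K : Matrix ι ι 𝕜} (hK : K.PosDef) :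
    InnerProductSpace.Core 𝕜 (ι →₀ 𝕜) where
  inner u v := u.sum fun i a ↦ v.sum fun j b ↦ star a * K i j * b
  conj_inner_symm u v := by
    simp only [map_finsuppSum]
    rw [Finsupp.sum_comm]
    refine Finsupp.sum_congr fun i _ ↦ Finsupp.sum_congr fun j _ ↦ ?_
    rw [← hK.isHermitian.apply i j]
    simp only [map_mul, starRingEnd_apply, star_star]
    ring
  re_inner_nonneg u := (RCLike.nonneg_iff.mp (hK.posSemidef.2 u)).1
  add_left u v w := by
    apply Finsupp.sum_add_index' <;> simp [add_mul]
  smul_left u v r := by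
    rw [Finsupp.sum_smul_index (by simp), Finsupp.mul_sum]
    simp only [Finsupp.mul_sum, star_mul', mul_assoc, starRingEnd_apply]
  definite u hu := by
    by_contra h
    exact (hK.2 h).ne' hu

/-- The matrix with diagonal entries `1` and all other entries `p`: the Gram matrix of unit vectors
with pairwise inner product `p`. -/
def equiangularMatrix (𝕜 : Type*) [RCLike 𝕜] (ι : Type*) [DecidableEq ι] (p : ℝ) : Matrix ι ι 𝕜 :=
  .of fun i j ↦ if i = j then 1 else (p : 𝕜)

theorem isHermitian_equiangularMatrix [DecidableEq ι] (p : ℝ) :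
    (equiangularMatrix 𝕜 ι p).IsHermitian := by
  ext i j
  rcases eq_or_ne i j with rfl | h
  · simp [equiangularMatrix]
  · simp [equiangularMatrix, h, h.symm]

theorem sum_star_mul_equiangularMatrix_mul [DecidableEq ι] (p : ℝ) (u : ι →₀ 𝕜) :
    (u.sum fun i a ↦ u.sum fun j b ↦ star a * equiangularMatrix 𝕜 ι p i j * b) =
      (((1 - p) * ∑ i ∈ u.support, ‖u i‖ ^ 2 + p * ‖∑ i ∈ u.support, u i‖ ^ 2 : ℝ) : 𝕜) := by
  have split_entry (i j : ι) : star (u i) * equiangularMatrix 𝕜 ι p i j * u j =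
      (if i = j then (1 - p) * (star (u i) * u j) else 0) + p * (star (u i) * u j) := by
    by_cases h : i = j <;> simp [equiangularMatrix, h] <;> ring
  simp only [Finsupp.sum, split_entry, Finset.sum_add_distrib, Finset.sum_ite_eq,
    ← Finset.mul_sum, ← Finset.sum_mul, ← star_sum]
  push_cast
  simp only [← RCLike.conj_mul, starRingEnd_apply, Finset.mul_sum]
  congr 1
  exact Finset.sum_congr rfl fun i hi ↦ if_pos hi

theorem norm_sum_sq_le_card_mul_sum_norm_sq {E : Type*} [SeminormedAddCommGroup E] (s : Finset ι)
    (v : ι → E) : ‖∑ i ∈ s, v i‖ ^ 2 ≤ s.card * ∑ i ∈ s, ‖v i‖ ^ 2 :=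
  (pow_le_pow_left₀ (norm_nonneg _) (norm_sum_le s v) 2).trans sq_sum_le_card_mul_sum_sq

/- `1 - p + s.card * p` is the eigenvalue of the `s × s` block on the all-ones vector; for `s = ∅`
the condition reads `p < 1`. -/
theorem posDef_equiangularMatrix [DecidableEq ι] {p : ℝ}
    (hp : ∀ s : Finset ι, 0 < 1 - p + s.card * p) : (equiangularMatrix 𝕜 ι p).PosDef := by
  refine ⟨isHermitian_equiangularMatrix p, fun u hu ↦ ?_⟩
  rw [sum_star_mul_equiangularMatrix_mul, RCLike.ofReal_pos]
  have hsum : 0 < ∑ i ∈ u.support, ‖u i‖ ^ 2 :=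
    Finset.sum_pos (fun i hi ↦ pow_pos (norm_pos_iff.mpr (Finsupp.mem_support_iff.mp hi)) 2)
      (Finsupp.support_nonempty_iff.mpr hu)
  rcases le_or_gt 0 p with h | h
  · have hp1 : 0 < 1 - p := by simpa using hp ∅
    positivity
  · calc 0 < (1 - p + u.support.card * p) * ∑ i ∈ u.support, ‖u i‖ ^ 2 :=
        mul_pos (hp u.support) hsum
      _ = (1 - p) * ∑ i ∈ u.support, ‖u i‖ ^ 2 +
          p * (u.support.card * ∑ i ∈ u.support, ‖u i‖ ^ 2) := by ring
      _ ≤ _ := add_le_add_right (mul_le_mul_of_nonpos_left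
          (norm_sum_sq_le_card_mul_sum_norm_sq u.support u) h.le) _

variable {E F : Type*} [NormedAddCommGroup E] [InnerProductSpace 𝕜 E]
  [NormedAddCommGroup F] [InnerProductSpace 𝕜 F]
  [LinearOrder ι] [LocallyFiniteOrderBot ι] [WellFoundedLT ι]

theorem exists_orthonormal_span_image_Iic_eq {x : ι → E} (hx : LinearIndependent 𝕜 x) :
    ∃ e : ι → E, Orthonormal 𝕜 e ∧
      ∀ i, span 𝕜 (e '' Set.Iic i) = span 𝕜 (x '' Set.Iic i) :=
  ⟨_, InnerProductSpace.gramSchmidtNormed_orthonormal hx, fun i ↦ by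
    rw [InnerProductSpace.span_gramSchmidtNormed, InnerProductSpace.span_gramSchmidt_Iic]⟩

theorem exists_orthonormal_basis_span_image_Iic_eq (b : Basis ι 𝕜 F) :
    ∃ f : Basis ι 𝕜 F, Orthonormal 𝕜 f ∧
      ∀ i, span 𝕜 (f '' Set.Iic i) = span 𝕜 (b '' Set.Iic i) := by
  obtain ⟨f, hf, hspan⟩ := exists_orthonormal_span_image_Iic_eq b.linearIndependent
  have htop : ⊤ ≤ span 𝕜 (Set.range f) := by
    rw [← b.span_eq, span_le]
    rintro _ ⟨i, rfl⟩
    have hi : b i ∈ span 𝕜 (f '' Set.Iic i) :=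
      hspan i ▸ subset_span (Set.mem_image_of_mem b Set.self_mem_Iic)
    exact span_mono (Set.image_subset_range f _) hi
  exact ⟨.mk hf.linearIndependent htop, by simpa using hf, by simpa using hspan⟩

theorem exists_linearIsometry_span_image_Iic_eq (b : Basis ι 𝕜 F) {x : ι → E}
    (hx : LinearIndependent 𝕜 x) :
    ∃ T : F →ₗᵢ[𝕜] E, ∀ i, span 𝕜 ((T ∘ b) '' Set.Iic i) = span 𝕜 (x '' Set.Iic i) := by
  obtain ⟨e, he, hex⟩ := exists_orthonormal_span_image_Iic_eq hx
  obtain ⟨f, hf, hfb⟩ := exists_orthonormal_basis_span_image_Iic_eq b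
  have hcomp : f.constr 𝕜 e ∘ f = e := funext (f.constr_basis 𝕜 e)
  refine ⟨(f.constr 𝕜 e).isometryOfOrthonormal hf (by rwa [hcomp]), fun i ↦ ?_⟩
  rw [LinearMap.coe_isometryOfOrthonormal]
  calc span 𝕜 ((f.constr 𝕜 e ∘ b) '' Set.Iic i)
      = (span 𝕜 (b '' Set.Iic i)).map (f.constr 𝕜 e) := by rw [map_span, Set.image_comp]
    _ = span 𝕜 ((f.constr 𝕜 e ∘ f) '' Set.Iic i) := by rw [← hfb, map_span, Set.image_comp]
    _ = span 𝕜 (x '' Set.Iic i) := by rw [hcomp, hex]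

theorem exists_gram_eq_span_image_Iic_eq {x : ι → E} (hx : LinearIndependent 𝕜 x)
    {K : Matrix ι ι 𝕜} (hK : K.PosDef) :
    ∃ z : ι → E, gram 𝕜 z = K ∧ ∀ i, span 𝕜 (z '' Set.Iic i) = span 𝕜 (x '' Set.Iic i) := by
  let core := finsuppCoreOfPosDef hK
  let : NormedAddCommGroup (ι →₀ 𝕜) := core.toNormedAddCommGroup
  let : InnerProductSpace 𝕜 (ι →₀ 𝕜) := .ofCore core.toCore
  obtain ⟨T, hT⟩ := exists_linearIsometry_span_image_Iic_eq Finsupp.basisSingleOne hx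
  refine ⟨T ∘ Finsupp.basisSingleOne, ?_, hT⟩
  ext i j
  have inner_single : inner 𝕜 (Finsupp.single i (1 : 𝕜)) (Finsupp.single j 1) = K i j := by
    change Finsupp.sum _ _ = _
    simp
  simpa using inner_single

theorem gram_schmidt_p_exists_infinite_general (x : ι → E) (hx : LinearIndependent 𝕜 x) (p : ℝ)
    (hp : ∀ s : Finset ι, 0 < 1 - p + s.card * p) :
    ∃ z : ι → E,
      (∀ i, span 𝕜 (z '' Set.Iic i) = span 𝕜 (x '' Set.Iic i)) ∧
      (∀ i, ‖z i‖ = 1) ∧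
      (∀ i j, i ≠ j → inner 𝕜 (z i) (z j) = (p : 𝕜)) := by
  obtain ⟨z, hgram, hspan⟩ := exists_gram_eq_span_image_Iic_eq hx (posDef_equiangularMatrix hp)
  have hinner (i j : ι) : inner 𝕜 (z i) (z j) = if i = j then 1 else (p : 𝕜) :=
    congr_fun₂ hgram i j
  refine ⟨z, hspan, fun i ↦ ?_, fun i j hij ↦ by rw [hinner, if_neg hij]⟩
  rw [norm_eq_sqrt_re_inner (𝕜 := 𝕜), hinner, if_pos rfl, RCLike.one_re, Real.sqrt_one]

end PrescribedGram

theorem gram_schmidt_p_exists_infinite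
    {V : Type*} [NormedAddCommGroup V] [InnerProductSpace ℝ V]
    (x : ℕ → V) (hx : LinearIndependent ℝ x)
    (p : ℝ) (hp1 : 0 ≤ p) (hp2 : p < 1) :
    ∃ z : ℕ → V,
      (∀ i : ℕ,
        Submodule.span ℝ (z '' Set.Iic i) = Submodule.span ℝ (x '' Set.Iic i)) ∧
      (∀ i : ℕ, ‖z i‖ = 1) ∧
      (∀ i j : ℕ, i ≠ j → ⟪z i, z j⟫ = p) :=
  gram_schmidt_p_exists_infinite_general x hx p fun s ↦
    add_pos_of_pos_of_nonneg (sub_pos.mpr hp2) (mul_nonneg s.card.cast_nonneg hp1)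
end

section
/- Let 0 < p < 1 and for m ≥ 1 set a_m(p) = (p/(1+p(m-1)))·√((1-p)(1+p(m-1))/(1+p(m-2))). Then for every integer k ≥ 1, the tail sum satisfies ∑_{m=k}^∞ a_m(p)² = p(1-p)/(1+p(k-2)). -/
/-!
With `x = p⁻¹ + m - 2`, the factors `1 + p (m - 1)` and `1 + p (m - 2)` are `p (x + 1)` and `p x`.
Hence `a_m(p)² = (1 - p) / (x (x + 1)) = (1 - p) (1 / x - 1 / (x + 1))`, and the sum telescopes.
-/

/-- The coefficients `a_m(p)` from the Gram--Schmidt `p`-algorithm. -/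
noncomputable def aCoeff (p : ℝ) (m : ℕ) : ℝ :=
  p / (1 + p * ((m : ℝ) - 1))
    * Real.sqrt ((1 - p) * (1 + p * ((m : ℝ) - 1)) / (1 + p * ((m : ℝ) - 2)))

open Filter Topology

theorem hasSum_sub_succ_of_antitone {f : ℕ → ℝ} {l : ℝ} (hf : Antitone f)
    (hl : Tendsto f atTop (𝓝 l)) : HasSum (fun n => f n - f (n + 1)) (f 0 - l) := by
  rw [hasSum_iff_tendsto_nat_of_nonneg fun n => sub_nonneg.2 (hf n.le_succ)]
  simpa only [Finset.sum_range_sub'] using hl.const_sub (f 0)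

theorem hasSum_inv_mul_add_one {x : ℝ} (hx : 0 < x) :
    HasSum (fun n : ℕ => ((x + n) * (x + n + 1))⁻¹) x⁻¹ := by
  have h_anti : Antitone fun n : ℕ => (x + n)⁻¹ := fun m n hmn => by
    dsimp only
    gcongr
  have h_lim : Tendsto (fun n : ℕ => (x + n)⁻¹) atTop (𝓝 0) :=
    (tendsto_atTop_add_const_left atTop x tendsto_natCast_atTop_atTop).inv_tendsto_atTop
  have h_partialFractions (n : ℕ) :
      ((x + n) * (x + n + 1))⁻¹ = (x + n)⁻¹ - (x + (n + 1 : ℕ))⁻¹ := by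
    push_cast
    field_simp
    ring
  simpa only [h_partialFractions, Nat.cast_zero, add_zero, sub_zero] using
    hasSum_sub_succ_of_antitone h_anti h_lim

theorem one_add_mul_eq_mul_inv_add {K : Type*} [DivisionRing K] {p : K} (hp : p ≠ 0) (y : K) :
    1 + p * y = p * (p⁻¹ + y) := by
  rw [mul_add, mul_inv_cancel₀ hp]

theorem aCoeff_sq {p : ℝ} {m : ℕ} (hp0 : p ≠ 0) (hp1 : p ≤ 1) (hm : 0 < p⁻¹ + ((m : ℝ) - 2)) :
    aCoeff p m ^ 2 = (1 - p) * ((p⁻¹ + (m - 2)) * (p⁻¹ + (m - 1)))⁻¹ := by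
  have hm' : 0 < p⁻¹ + ((m : ℝ) - 1) := by linarith
  rw [aCoeff, one_add_mul_eq_mul_inv_add hp0, one_add_mul_eq_mul_inv_add hp0]
  generalize p⁻¹ + ((m : ℝ) - 2) = x at hm ⊢
  generalize p⁻¹ + ((m : ℝ) - 1) = y at hm' ⊢
  have h_radicand : (1 - p) * (p * y) / (p * x) = (1 - p) * y / x := by
    field_simp
  have h_nonneg : 0 ≤ (1 - p) * y / x :=
    div_nonneg (mul_nonneg (sub_nonneg.2 hp1) hm'.le) hm.le
  rw [h_radicand, mul_pow, Real.sq_sqrt h_nonneg]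
  field_simp

theorem aCoeff_sq_tail_sum_general (p : ℝ) (hp0 : p ≠ 0) (hp1 : p ≤ 1) (k : ℕ)
    (hk : 0 < p⁻¹ + ((k : ℝ) - 2)) :
    HasSum (fun j : ℕ => aCoeff p (k + j) ^ 2) (p * (1 - p) / (1 + p * ((k : ℝ) - 2))) := by
  have h_term (j : ℕ) : aCoeff p (k + j) ^ 2 =
      (1 - p) * ((p⁻¹ + (k - 2) + j) * (p⁻¹ + (k - 2) + j + 1))⁻¹ := by
    have h_fst : p⁻¹ + (((k + j : ℕ) : ℝ) - 2) = p⁻¹ + (k - 2) + j := by push_cast; ring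
    have h_snd : p⁻¹ + (((k + j : ℕ) : ℝ) - 1) = p⁻¹ + (k - 2) + j + 1 := by push_cast; ring
    rw [aCoeff_sq hp0 hp1 (by rw [h_fst]; positivity), h_fst, h_snd]
  have h_sum : p * (1 - p) / (1 + p * ((k : ℝ) - 2)) = (1 - p) * (p⁻¹ + (k - 2))⁻¹ := by
    rw [one_add_mul_eq_mul_inv_add hp0, mul_div_mul_left _ _ hp0, div_eq_mul_inv]
  simpa only [h_term, h_sum] using (hasSum_inv_mul_add_one hk).mul_left (1 - p)

theorem aCoeff_sq_tail_sum (p : ℝ) (hp1 : 0 < p) (hp2 : p < 1)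
    (k : ℕ) (hk : 1 ≤ k) :
    HasSum (fun j : ℕ => aCoeff p (k + j) ^ 2)
      (p * (1 - p) / (1 + p * ((k : ℝ) - 2))) := by
  have hk' : (1 : ℝ) ≤ k := by exact_mod_cast hk
  exact aCoeff_sq_tail_sum_general p hp1.ne' hp2.le k (by linarith [one_lt_inv₀ hp1 |>.2 hp2])
end
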